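/- arXiv:2112.04838 — 4 statements merged into one kernel-verified Lean document; each statement's English description precedes it below -/
import Mathlib

section
/- Let N = p·q where p and q are distinct primes, each greater than 32. Let A be a 32×33 matrix over ZMod N (rows indexed by Fin 32, columns by Fin 33), let α, β ∈ ZMod N, let t' : Fin 32 → ZMod N, let r : Fin 32 → ZMod N, and let π be a permutation of Fin 32. Define the 33×33 matrix M over ZMod N by M[i][j] = C(i,j)·α^j·β^{i−j} for j ≤ i and M[i][j] = 0 for j > i, and for c ∈ ZMod N define s(c) : Fin 33 → ZMod N by s(c)[j] = (α·c + β)^j. Then the following are equivalent: (1) for every c ∈ ZMod N and every i ∈ Fin 32, (Σ_{j ∈ Fin 33} A[i][j]·s(c)[j]) − c^{32}·t'(i) = r(π(i))·c^{π(i)}; (2) for every i ∈ Fin 32, the i-th row of the matrix product A·M equals r(π(i)) at column π(i) (viewed as an element of Fin 33), equals t'(i) at column 32, and equals 0 at every other column. -/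
/-- The lower-triangular binomial matrix `M` with `M[i][j] = C(i,j)·α^j·β^(i−j)` for `j ≤ i`. -/
def binomMat {R : Type*} [CommRing R] (α β : R) : Matrix (Fin 33) (Fin 33) R :=
  Matrix.of fun i j =>
    if (j : ℕ) ≤ (i : ℕ) then (Nat.choose i j : R) * α ^ (j : ℕ) * β ^ ((i : ℕ) - (j : ℕ)) else 0

/-!
By the binomial theorem `binomMat α β` sends the powers of `c` to the powers of `α * c + β`, so
each row of `A * binomMat α β` lists the coefficients in `c` of the polynomial computed by the same
row of `A`. Both sides of the required identity are polynomials in `c` of degree at most `32`, and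
such a polynomial is determined by its values at `33` points whose pairwise differences are units,
because their Vandermonde matrix is invertible. Modulo `p * q` with `p, q > 32` the points
`0, …, 32` qualify, since `32!` is coprime to `p * q`.
-/

open Matrix

/-- The vector `(1, c, …, c ^ (n - 1))` of the first `n` powers of `c`: the dot product with it
evaluates at `c` the polynomial with a given coefficient vector. The paper's `s(c)` is
`powerVec 33 (α * c + β)`. -/
def powerVec {R : Type*} [Monoid R] (n : ℕ) (c : R) : Fin n → R := fun j => c ^ (j : ℕ)

lemma add_pow_eq_sum_range_of_lt {R : Type*} [CommSemiring R] {m n : ℕ} (hm : m < n)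
    (x y : R) :
    (x + y) ^ m = ∑ k ∈ Finset.range n, x ^ k * y ^ (m - k) * m.choose k := by
  rw [add_pow]
  refine (Finset.eventually_constant_sum (fun k hk => ?_) hm).symm
  rw [Nat.choose_eq_zero_of_lt hk, Nat.cast_zero, mul_zero]

section CommRing

variable {R : Type*} [CommRing R] {n : ℕ}

lemma binomMat_apply (α β : R) (i j : Fin 33) :
    binomMat α β i j = (i : ℕ).choose j * α ^ (j : ℕ) * β ^ ((i : ℕ) - j) := by
  rw [binomMat, of_apply, ite_eq_left_iff, not_le]
  intro hij
  simp [Nat.choose_eq_zero_of_lt hij]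

lemma binomMat_mulVec_powerVec (α β c : R) :
    binomMat α β *ᵥ powerVec 33 c = powerVec 33 (α * c + β) := by
  ext i
  simp only [mulVec, dotProduct, powerVec, binomMat_apply]
  rw [add_pow_eq_sum_range_of_lt i.isLt, Finset.sum_range]
  refine Finset.sum_congr rfl fun j _ => ?_
  ring

lemma sum_mul_affine_pow_eq_dotProduct_powerVec {ι : Type*} (A : Matrix ι (Fin 33) R)
    (α β c : R) (i : ι) :
    ∑ j : Fin 33, A i j * (α * c + β) ^ (j : ℕ) = (A * binomMat α β) i ⬝ᵥ powerVec 33 c :=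
  calc
    _ = (A *ᵥ powerVec 33 (α * c + β)) i := rfl
    _ = ((A * binomMat α β) *ᵥ powerVec 33 c) i := by
      rw [← binomMat_mulVec_powerVec, mulVec_mulVec]

lemma isUnit_vandermonde {v : Fin n → R} (hv : Pairwise fun i j => IsUnit (v i - v j)) :
    IsUnit (vandermonde v) := by
  rw [isUnit_iff_isUnit_det, det_vandermonde]
  exact IsUnit.prod_univ_iff.2 fun i => IsUnit.prod_iff.2 fun j hj =>
    hv (Finset.mem_Ioi.1 hj).ne'

lemma eq_of_forall_dotProduct_powerVec_eq {v : Fin n → R}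
    (hv : Pairwise fun i j => IsUnit (v i - v j)) {a b : Fin n → R}
    (h : ∀ i, a ⬝ᵥ powerVec n (v i) = b ⬝ᵥ powerVec n (v i)) : a = b := by
  apply mulVec_injective_of_isUnit (isUnit_vandermonde hv)
  ext i
  calc
    powerVec n (v i) ⬝ᵥ a = a ⬝ᵥ powerVec n (v i) := dotProduct_comm _ _
    _ = b ⬝ᵥ powerVec n (v i) := h i
    _ = powerVec n (v i) ⬝ᵥ b := dotProduct_comm _ _

end CommRing

lemma single_add_single_dotProduct_powerVec {R : Type*} [Semiring R] {n : ℕ} (k l : Fin n)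
    (a b c : R) :
    (Pi.single k a + Pi.single l b) ⬝ᵥ powerVec n c = a * c ^ (k : ℕ) + b * c ^ (l : ℕ) := by
  rw [add_dotProduct, single_dotProduct, single_dotProduct]
  rfl

lemma single_add_single_apply_of_ne {ι M : Type*} [DecidableEq ι] [AddZeroClass M] {k l : ι}
    (hkl : k ≠ l) (a b : M) (j : ι) :
    (Pi.single k a + Pi.single l b : ι → M) j = if j = k then a else if j = l then b else 0 := by
  rw [Pi.add_apply, Pi.single_apply, Pi.single_apply]
  split_ifs with hk hl
  · exact absurd (hk.symm.trans hl) hkl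
  · exact add_zero a
  · exact zero_add b
  · exact add_zero 0

lemma pairwise_isUnit_natCast_sub_zmod {N n : ℕ} (hN : n.factorial.Coprime N) :
    Pairwise fun i j : Fin (n + 1) => IsUnit (((i : ℕ) : ZMod N) - ((j : ℕ) : ZMod N)) := by
  intro i j hij
  wlog hlt : j < i generalizing i j
  · rw [← IsUnit.neg_iff, neg_sub]
    exact this hij.symm (hij.lt_of_le (not_lt.1 hlt))
  · have hdvd : (i - j : ℕ) ∣ n.factorial := Nat.dvd_factorial (Nat.sub_pos_of_lt hlt) (by omega)
    rw [← Nat.cast_sub hlt.le, ZMod.isUnit_iff_coprime]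
    exact hN.coprime_dvd_left hdvd

theorem stmt0_general {R ι : Type*} [CommRing R] {v : Fin 33 → R}
    (hv : Pairwise fun i j => IsUnit (v i - v j)) (A : Matrix ι (Fin 33) R) (α β : R)
    (t' r : ι → R) (e : ι → Fin 32) :
    (∀ (c : R) (i : ι),
        (∑ j : Fin 33, A i j * (α * c + β) ^ (j : ℕ)) - c ^ 32 * t' i = r i * c ^ (e i : ℕ)) ↔
    (∀ (i : ι) (j : Fin 33),
        (A * binomMat α β) i j =
          if j = Fin.castSucc (e i) then r i
          else if j = Fin.last 32 then t' i
          else 0) := by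
  let row (i : ι) : Fin 33 → R := Pi.single (e i).castSucc (r i) + Pi.single (Fin.last 32) (t' i)
  have eval_iff (c : R) (i : ι) :
      (∑ j : Fin 33, A i j * (α * c + β) ^ (j : ℕ)) - c ^ 32 * t' i = r i * c ^ (e i : ℕ) ↔
        (A * binomMat α β) i ⬝ᵥ powerVec 33 c = row i ⬝ᵥ powerVec 33 c := by
    rw [sum_mul_affine_pow_eq_dotProduct_powerVec, single_add_single_dotProduct_powerVec,
      sub_eq_iff_eq_add, mul_comm (c ^ 32)]
    rfl
  simp only [eval_iff, ← single_add_single_apply_of_ne (Fin.castSucc_ne_last _)]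
  exact ⟨fun h i => congrFun (eq_of_forall_dotProduct_powerVec_eq hv fun k => h (v k) i),
    fun h c i => congrArg (· ⬝ᵥ powerVec 33 c) (funext (h i))⟩

theorem stmt0 (p q : ℕ) (hp : p.Prime) (hq : q.Prime) (hpq : p ≠ q)
    (hp32 : 32 < p) (hq32 : 32 < q)
    (A : Matrix (Fin 32) (Fin 33) (ZMod (p * q)))
    (α β : ZMod (p * q)) (t' r : Fin 32 → ZMod (p * q)) (π : Equiv.Perm (Fin 32)) :
    (∀ (c : ZMod (p * q)) (i : Fin 32),
        (∑ j : Fin 33, A i j * (α * c + β) ^ (j : ℕ)) - c ^ 32 * t' i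
          = r (π i) * c ^ ((π i : ℕ))) ↔
    (∀ (i : Fin 32) (j : Fin 33),
        (A * binomMat α β) i j =
          if j = Fin.castSucc (π i) then r (π i)
          else if j = Fin.last 32 then t' i
          else 0) := by
  have h32 : (Nat.factorial 32).Coprime (p * q) :=
    (hp.coprime_factorial_of_lt hp32).symm.mul_right (hq.coprime_factorial_of_lt hq32).symm
  exact stmt0_general (pairwise_isUnit_natCast_sub_zmod h32) A α β t' (r ∘ π) π
end

section
/- Let N be a positive natural number, let c ∈ ZMod N, let π be a permutation of Fin 32, let k be a natural number, and let d : Fin (k+1) → Fin 32. Define the lookup table v : Fin 32 → ZMod N by v(j) = c^{π(j)} (exponent taken as a natural number). Define the sequence m_k, …, m_0 in ZMod N by m_k = v(π⁻¹(d(k))) and m_i = (m_{i+1})^{32} · v(π⁻¹(d(i))) for i = k−1 down to 0. Then m_0 = c^{Σ_{i=0}^{k} d(i)·32^i}. -/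
/-!
Looking up `π⁻¹ (d i)` in the permuted table returns `c ^ d i`, so every `m i` is a power of `c`,
and on exponents the recursion is Horner's rule in base `b` for the digits `d`.
-/

theorem sum_univ_succ_mul_pow {R : Type*} [Semiring R] {n : ℕ} (a : Fin (n + 1) → R) (x : R) :
    ∑ i, a i * x ^ (i : ℕ) = (∑ i : Fin n, a i.succ * x ^ (i : ℕ)) * x + a 0 := by
  rw [Fin.sum_univ_succ, Finset.sum_mul, add_comm]
  simp only [Fin.val_zero, Fin.val_succ, pow_zero, mul_one, pow_succ, mul_assoc]

theorem eq_pow_sum_of_horner {M : Type*} [Monoid M] (b : ℕ) (c : M) {k : ℕ}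
    (e : Fin (k + 1) → ℕ) (m : Fin (k + 1) → M)
    (hlast : m (Fin.last k) = c ^ e (Fin.last k))
    (hstep : ∀ i : Fin k, m i.castSucc = m i.succ ^ b * c ^ e i.castSucc) :
    m 0 = c ^ ∑ i, e i * b ^ (i : ℕ) := by
  induction k with
  | zero => simpa using hlast
  | succ k ih =>
    have htail : m (Fin.succ 0) = c ^ ∑ i : Fin (k + 1), e i.succ * b ^ (i : ℕ) :=
      ih (fun i => e i.succ) (fun i => m i.succ) hlast (fun i => hstep i.succ)
    calc
      m 0 = m (Fin.succ 0) ^ b * c ^ e 0 := hstep 0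
      _ = c ^ ((∑ i : Fin (k + 1), e i.succ * b ^ (i : ℕ)) * b + e 0) := by
        rw [htail, ← pow_mul, ← pow_add]
      _ = c ^ ∑ i, e i * b ^ (i : ℕ) := by rw [sum_univ_succ_mul_pow e b]

theorem stmt5_general {M : Type*} [Monoid M] {b : ℕ} (c : M) (π : Equiv.Perm (Fin b))
    {k : ℕ} (d : Fin (k + 1) → Fin b)
    (v : Fin b → M) (hv : ∀ j, v j = c ^ (π j : ℕ))
    (m : Fin (k + 1) → M)
    (hlast : m (Fin.last k) = v (π⁻¹ (d (Fin.last k))))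
    (hstep : ∀ i : Fin k, m i.castSucc = m i.succ ^ b * v (π⁻¹ (d i.castSucc))) :
    m 0 = c ^ ∑ i, (d i : ℕ) * b ^ (i : ℕ) := by
  have hlookup (j : Fin b) : v (π⁻¹ j) = c ^ (j : ℕ) := by
    rw [hv, Equiv.Perm.inv_def, Equiv.apply_symm_apply]
  simp only [hlookup] at hlast hstep
  exact eq_pow_sum_of_horner b c (fun i => (d i : ℕ)) m hlast hstep

theorem stmt5 (N : ℕ) (hN : 0 < N) (c : ZMod N) (π : Equiv.Perm (Fin 32))
    (k : ℕ) (d : Fin (k + 1) → Fin 32)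
    (v : Fin 32 → ZMod N) (hv : ∀ j, v j = c ^ ((π j : ℕ)))
    (m : Fin (k + 1) → ZMod N)
    (hlast : m (Fin.last k) = v (π⁻¹ (d (Fin.last k))))
    (hstep : ∀ i : Fin k,
        m (Fin.castSucc i) = (m i.succ) ^ 32 * v (π⁻¹ (d (Fin.castSucc i)))) :
    m 0 = c ^ (∑ i : Fin (k + 1), (d i : ℕ) * 32 ^ (i : ℕ)) :=
  stmt5_general c π d v hv m hlast hstep
end

section
/- Let N be a positive natural number, let c ∈ ZMod N, let π be a permutation of Fin 32, let r : Fin 32 → ZMod N, let k be a natural number, and let d : Fin (k+1) → Fin 32. Define the lookup table v : Fin 32 → ZMod N by v(j) = r(π(j))·c^{π(j)} (exponent taken as a natural number). Define the sequence m_k, …, m_0 in ZMod N by m_k = v(π⁻¹(d(k))) and m_i = (m_{i+1})^{32} · v(π⁻¹(d(i))) for i = k−1 down to 0. Then m_0 = c^{Σ_{i=0}^{k} d(i)·32^i} · Π_{i=0}^{k} (r(d(i)))^{32^i}. -/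
/-!
Horner's scheme evaluates the loop to the product of the looked-up entries, the `i`-th one raised to
the power `32 ^ i`. Looking up `π⁻¹ (d i)` in the permuted table cancels `π`, so this entry is
`r (d i) * c ^ d i`; since powers distribute over products, the mask `r` separates from the powers
of `c`, whose exponents add up to the number with digits `d`.
-/

theorem horner_prod_pow {M : Type*} [CommMonoid M] (b : ℕ) {k : ℕ} (a m : Fin (k + 1) → M)
    (hlast : m (Fin.last k) = a (Fin.last k))
    (hstep : ∀ i : Fin k, m i.castSucc = m i.succ ^ b * a i.castSucc) :
    m 0 = ∏ i, a i ^ b ^ (i : ℕ) := by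
  induction k with
  | zero => simpa using hlast
  | succ k ih =>
    have htail : m (Fin.succ 0) = ∏ i : Fin (k + 1), a i.succ ^ b ^ (i : ℕ) :=
      ih (fun i => a i.succ) (fun i => m i.succ) hlast fun i => hstep i.succ
    calc
      m 0 = m (Fin.succ 0) ^ b * a 0 := hstep 0
      _ = a 0 * ∏ i : Fin (k + 1), a i.succ ^ b ^ ((i : ℕ) + 1) := by
        rw [htail, mul_comm, ← Finset.prod_pow]
        simp only [← pow_mul, ← pow_succ]
      _ = ∏ i, a i ^ b ^ (i : ℕ) := by
        simp only [Fin.prod_univ_succ (n := k + 1), Fin.val_zero, Fin.val_succ, pow_zero, pow_one]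

theorem prod_mul_pow_pow {ι M : Type*} [CommMonoid M] (s : Finset ι) (x : M) (y : ι → M)
    (e w : ι → ℕ) :
    ∏ i ∈ s, (y i * x ^ e i) ^ w i = x ^ (∑ i ∈ s, e i * w i) * ∏ i ∈ s, y i ^ w i := by
  simp only [mul_pow, ← pow_mul, Finset.prod_mul_distrib, Finset.prod_pow_eq_pow_sum]
  exact mul_comm _ _

theorem stmt6_general {M : Type*} [CommMonoid M] {b : ℕ} (c : M) (π : Equiv.Perm (Fin b))
    (r : Fin b → M) {k : ℕ} (d : Fin (k + 1) → Fin b)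
    (v : Fin b → M) (hv : ∀ j, v j = r (π j) * c ^ (π j : ℕ))
    (m : Fin (k + 1) → M)
    (hlast : m (Fin.last k) = v (π⁻¹ (d (Fin.last k))))
    (hstep : ∀ i : Fin k, m i.castSucc = m i.succ ^ b * v (π⁻¹ (d i.castSucc))) :
    m 0 = c ^ (∑ i, (d i : ℕ) * b ^ (i : ℕ)) * ∏ i, r (d i) ^ b ^ (i : ℕ) := by
  have hlookup (i : Fin (k + 1)) : v (π⁻¹ (d i)) = r (d i) * c ^ (d i : ℕ) := by
    rw [hv, Equiv.Perm.coe_inv, Equiv.apply_symm_apply]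
  calc
    m 0 = ∏ i, v (π⁻¹ (d i)) ^ b ^ (i : ℕ) :=
      horner_prod_pow b (fun i => v (π⁻¹ (d i))) m hlast hstep
    _ = ∏ i, (r (d i) * c ^ (d i : ℕ)) ^ b ^ (i : ℕ) := by simp only [hlookup]
    _ = c ^ (∑ i, (d i : ℕ) * b ^ (i : ℕ)) * ∏ i, r (d i) ^ b ^ (i : ℕ) :=
      prod_mul_pow_pow Finset.univ c (fun i => r (d i)) (fun i => d i) (fun i => b ^ (i : ℕ))

theorem stmt6 (N : ℕ) (hN : 0 < N) (c : ZMod N) (π : Equiv.Perm (Fin 32))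
    (r : Fin 32 → ZMod N)
    (k : ℕ) (d : Fin (k + 1) → Fin 32)
    (v : Fin 32 → ZMod N) (hv : ∀ j, v j = r (π j) * c ^ ((π j : ℕ)))
    (m : Fin (k + 1) → ZMod N)
    (hlast : m (Fin.last k) = v (π⁻¹ (d (Fin.last k))))
    (hstep : ∀ i : Fin k,
        m (Fin.castSucc i) = (m i.succ) ^ 32 * v (π⁻¹ (d (Fin.castSucc i)))) :
    m 0 = c ^ (∑ i : Fin (k + 1), (d i : ℕ) * 32 ^ (i : ℕ)) *
          ∏ i : Fin (k + 1), (r (d i)) ^ (32 ^ (i : ℕ)) :=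
  stmt6_general c π r d v hv m hlast hstep
end

section
/- Let p and q be distinct primes and N = p·q, and let c be an integer with gcd(c, N) = 1. Let d, d_{p,1}, d_{p,2}, d_{q,1}, d_{q,2} be natural numbers with d_{p,1} + d_{p,2} ≡ d (mod p−1) and d_{q,1} + d_{q,2} ≡ d (mod q−1). Let p₁, p₂, q₁, q₂ be integers with p₁ > 0, q₁ > 0, p dividing p₁ − p₂, and q dividing q₁ − q₂. Let γ₁, γ₂, γ₃ be integers with γ₁·(γ₂ + γ₃) ≡ 1 (mod p) and γ₁·(γ₂ + γ₃) ≡ 0 (mod q). Define m_p = ⌊(c^{d_{p,1}}·c^{d_{p,2}}) / p₁⌋·p₂ + ((c^{d_{p,1}}·c^{d_{p,2}}) mod p₁) and m_q = ⌊(c^{d_{q,1}}·c^{d_{q,2}}) / q₁⌋·q₂ + ((c^{d_{q,1}}·c^{d_{q,2}}) mod q₁), with integer quotient and nonnegative remainder. Then (m_p − m_q)·γ₁·(γ₂ + γ₃) + m_q ≡ c^d (mod N). -/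
/-!
Euclidean division of `x` by `p₁`, recombined with `p₂` in place of `p₁`, changes `x` by a multiple
of `p₁ - p₂`, hence of `p`. So each half-exponentiation computes `c ^ d` modulo its own modulus, by
Euler's theorem. If `e ≡ 1 [ZMOD m]` and `e ≡ 0 [ZMOD n]`, the identity
`(x - y) * e + y - z = (x - z) * e + (1 - e) * (y - z)` recombines the two halves: each product on
the right is a multiple of `m * n`.
-/

/-- Reduction of `x` by an additively split modulus `m - k`: the quotient by `m` is multiplied
by `k`, so that `m - k` itself is not needed. The result is a representative of the residue class of
`x` modulo `m - k`, not a reduced one. -/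
def splitMod (x m k : ℤ) : ℤ := x / m * k + x % m

theorem splitMod_eq_sub (x m k : ℤ) : splitMod x m k = x - x / m * (m - k) := by
  have h : x / m * m + x % m = x := Int.ediv_mul_add_emod x m
  unfold splitMod
  linear_combination h

theorem splitMod_modEq {n m k : ℤ} (h : n ∣ m - k) (x : ℤ) : splitMod x m k ≡ x [ZMOD n] := by
  rw [splitMod_eq_sub]
  exact Int.modEq_iff_dvd.mpr (by simpa only [sub_sub_cancel] using h.mul_left (x / m))

theorem int_pow_modEq_pow_of_modEq_totient {n : ℕ} {c : ℤ} (hc : IsCoprime c n) {a b : ℕ}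
    (h : a ≡ b [MOD n.totient]) : c ^ a ≡ c ^ b [ZMOD n] := by
  let u : (ZMod n)ˣ := ZMod.unitOfIsCoprime c hc
  have hu : u ^ a = u ^ b :=
    pow_eq_pow_iff_modEq.mpr (h.of_dvd (orderOf_dvd_of_pow_eq_one (ZMod.pow_totient u)))
  rw [← ZMod.intCast_eq_intCast_iff]
  simpa [u] using congrArg Units.val hu

theorem splitMod_pow_mul_pow_modEq {n : ℕ} {c : ℤ} (hc : IsCoprime c n) {a b d : ℕ}
    (hd : a + b ≡ d [MOD n.totient]) {m k : ℤ} (hmk : (n : ℤ) ∣ m - k) :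
    splitMod (c ^ a * c ^ b) m k ≡ c ^ d [ZMOD n] :=
  calc splitMod (c ^ a * c ^ b) m k
    _ ≡ c ^ a * c ^ b [ZMOD n] := splitMod_modEq hmk _
    _ = c ^ (a + b) := (pow_add c a b).symm
    _ ≡ c ^ d [ZMOD n] := int_pow_modEq_pow_of_modEq_totient hc hd

theorem sub_mul_add_modEq_mul {m n e x y z : ℤ} (hem : e ≡ 1 [ZMOD m]) (hen : e ≡ 0 [ZMOD n])
    (hx : x ≡ z [ZMOD m]) (hy : y ≡ z [ZMOD n]) : (x - y) * e + y ≡ z [ZMOD m * n] := by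
  have hxe : m * n ∣ (x - z) * e := mul_dvd_mul hx.symm.dvd (Int.modEq_zero_iff_dvd.mp hen)
  have hye : m * n ∣ (1 - e) * (y - z) := mul_dvd_mul hem.dvd hy.symm.dvd
  have hsplit : (x - y) * e + y - z = (x - z) * e + (1 - e) * (y - z) := by ring
  exact (Int.modEq_iff_dvd.mpr (hsplit ▸ dvd_add hxe hye)).symm

theorem stmt12_general (p q : ℕ) (c : ℤ) (hc : IsCoprime c ((p : ℤ) * (q : ℤ)))
    (d dp1 dp2 dq1 dq2 : ℕ)
    (hdp : dp1 + dp2 ≡ d [MOD p.totient]) (hdq : dq1 + dq2 ≡ d [MOD q.totient])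
    (p₁ p₂ q₁ q₂ : ℤ) (_hp₁ : p₁ ≠ 0) (_hq₁ : q₁ ≠ 0)
    (hpd : (p : ℤ) ∣ p₁ - p₂) (hqd : (q : ℤ) ∣ q₁ - q₂)
    (γ₁ γ₂ γ₃ : ℤ)
    (hγp : γ₁ * (γ₂ + γ₃) ≡ 1 [ZMOD (p : ℤ)])
    (hγq : γ₁ * (γ₂ + γ₃) ≡ 0 [ZMOD (q : ℤ)]) :
    (splitMod (c ^ dp1 * c ^ dp2) p₁ p₂ - splitMod (c ^ dq1 * c ^ dq2) q₁ q₂)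
        * (γ₁ * (γ₂ + γ₃))
      + splitMod (c ^ dq1 * c ^ dq2) q₁ q₂
      ≡ c ^ d [ZMOD ((p : ℤ) * (q : ℤ))] :=
  sub_mul_add_modEq_mul hγp hγq
    (splitMod_pow_mul_pow_modEq hc.of_mul_right_left hdp hpd)
    (splitMod_pow_mul_pow_modEq hc.of_mul_right_right hdq hqd)

theorem stmt12 (p q : ℕ) (hp : p.Prime) (hq : q.Prime) (hpq : p ≠ q)
    (c : ℤ) (hc : Int.gcd c ((p : ℤ) * (q : ℤ)) = 1)
    (d dp1 dp2 dq1 dq2 : ℕ)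
    (hdp : dp1 + dp2 ≡ d [MOD p - 1]) (hdq : dq1 + dq2 ≡ d [MOD q - 1])
    (p₁ p₂ q₁ q₂ : ℤ) (hp₁ : 0 < p₁) (hq₁ : 0 < q₁)
    (hpd : (p : ℤ) ∣ p₁ - p₂) (hqd : (q : ℤ) ∣ q₁ - q₂)
    (γ₁ γ₂ γ₃ : ℤ)
    (hγp : γ₁ * (γ₂ + γ₃) ≡ 1 [ZMOD (p : ℤ)])
    (hγq : γ₁ * (γ₂ + γ₃) ≡ 0 [ZMOD (q : ℤ)]) :
    ((Int.ediv (c ^ dp1 * c ^ dp2) p₁ * p₂ + Int.emod (c ^ dp1 * c ^ dp2) p₁)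
        - (Int.ediv (c ^ dq1 * c ^ dq2) q₁ * q₂ + Int.emod (c ^ dq1 * c ^ dq2) q₁))
        * (γ₁ * (γ₂ + γ₃))
      + (Int.ediv (c ^ dq1 * c ^ dq2) q₁ * q₂ + Int.emod (c ^ dq1 * c ^ dq2) q₁)
      ≡ c ^ d [ZMOD ((p : ℤ) * (q : ℤ))] :=
  stmt12_general p q c (Int.isCoprime_iff_gcd_eq_one.mpr hc) d dp1 dp2 dq1 dq2
    (by rwa [Nat.totient_prime hp]) (by rwa [Nat.totient_prime hq])
    p₁ p₂ q₁ q₂ hp₁.ne' hq₁.ne' hpd hqd γ₁ γ₂ γ₃ hγp hγq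
end
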